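/- arXiv:1712.03050 — 2 statements merged into one kernel-verified Lean document; each statement's English description precedes it below -/
import Mathlib

section
/- Let K be a compact metric space and σ: K^ℤ → K^ℤ the full shift on the alphabet K. Then mdim(K^ℤ, σ) ≤ dim K. -/
open Filter Set
open scoped ENNReal

namespace MeanDimPaper

variable {X : Type*} [TopologicalSpace X]

/-- `α` is an open cover of `X`. -/
def IsOpenCover (α : Set (Set X)) : Prop :=
  (∀ U ∈ α, IsOpen U) ∧ ⋃₀ α = Set.univ

/-- The order of a cover `α`: the maximum `n ≥ 0` such that there exist `n + 1`
pairwise distinct members of `α` with nonempty common intersection. -/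
noncomputable def ord (α : Set (Set X)) : ℕ∞ :=
  ⨆ n ∈ {n : ℕ | ∃ f : Fin (n + 1) → Set X,
      Function.Injective f ∧ (∀ i, f i ∈ α) ∧ (⋂ i, f i).Nonempty}, (n : ℕ∞)

/-- `β` refines `α`: every member of `β` is contained in some member of `α`. -/
def Refines (β α : Set (Set X)) : Prop := ∀ V ∈ β, ∃ U ∈ α, V ⊆ U

/-- `D(α)`: the minimum of `ord β` over open covers `β` refining `α`. -/
noncomputable def covD (α : Set (Set X)) : ℕ∞ :=
  ⨅ β ∈ {β : Set (Set X) | IsOpenCover β ∧ Refines β α}, ord β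

/-- Topological (covering) dimension: the supremum of `D(α)` over open covers `α`. -/
noncomputable def topDim (X : Type*) [TopologicalSpace X] : ℕ∞ :=
  ⨆ α ∈ {α : Set (Set X) | IsOpenCover α}, covD α

/-- Diameter of a set with respect to a distance function `d`. -/
noncomputable def diamD (d : X → X → ℝ) (U : Set X) : ℝ :=
  sSup {r | ∃ x ∈ U, ∃ y ∈ U, r = d x y}

/-- Mesh of a cover: the supremum of the diameters of its members. -/
noncomputable def mesh (d : X → X → ℝ) (α : Set (Set X)) : ℝ :=
  sSup (diamD d '' α)

/-- `widim_ε(X, d)`: the minimum of `D(α)` over open covers `α` with `mesh(α, d) < ε`. -/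
noncomputable def widim (ε : ℝ) (d : X → X → ℝ) : ℕ∞ :=
  ⨅ α ∈ {α : Set (Set X) | IsOpenCover α ∧ mesh d α < ε}, covD α

/-- `d` is a metric on `X` compatible with the topology of `X`. -/
structure IsCompatMetric {X : Type*} [TopologicalSpace X] (d : X → X → ℝ) : Prop where
  refl : ∀ x, d x x = 0
  eq_of : ∀ x y, d x y = 0 → x = y
  symm : ∀ x y, d x y = d y x
  triangle : ∀ x y z, d x z ≤ d x y + d y z
  isOpen_iff : ∀ U : Set X, IsOpen U ↔ ∀ x ∈ U, ∃ ε > 0, ∀ y, d x y < ε → y ∈ U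

/-- The dynamical distance `d_n(x, y) = max_{0 ≤ i < n} d(Tⁱ x, Tⁱ y)`. -/
noncomputable def dynDist (d : X → X → ℝ) (T : X → X) (n : ℕ) (x y : X) : ℝ :=
  sSup {r | ∃ i < n, r = d (T^[i] x) (T^[i] y)}

/-- Mean dimension `mdim(X, T)` computed with the metric `d`:
`lim_{ε → 0} lim_{n → ∞} widim_ε(X, d_n) / n`.  The inner limit exists (by
subadditivity of `n ↦ widim_ε(X, d_n)`) so it coincides with the liminf, and the inner
quantity is monotone as `ε` decreases, so the limit as `ε → 0` is the supremum over
`ε > 0`. -/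
noncomputable def mdim (T : X → X) (d : X → X → ℝ) : ℝ≥0∞ :=
  ⨆ (ε : ℝ) (_ : 0 < ε),
    Filter.liminf (fun n : ℕ => (widim ε (dynDist d T n) : ℝ≥0∞) / (n : ℝ≥0∞)) Filter.atTop

/-- The full shift `σ` on the alphabet `K`: `σ((xₙ)ₙ) = (xₙ₊₁)ₙ`. -/
def shift (K : Type*) : (ℤ → K) → ℤ → K := fun x n => x (n + 1)

/-- `U` is a disjoint union of open sets of small diameter. -/
def Good {K : Type*} [MetricSpace K] (δ : ℝ) (U : Set K) : Prop :=
  ∃ S : Set (Set K), (∀ s ∈ S, IsOpen s ∧ ∀ x ∈ s, ∀ y ∈ s, dist x y < δ) ∧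
    (∀ s ∈ S, ∀ t ∈ S, (s ∩ t).Nonempty → s = t) ∧ ⋃₀ S = U

lemma Good.isOpen {K : Type*} [MetricSpace K] {δ : ℝ} {U : Set K} (h : Good δ U) :
    IsOpen U := by
  obtain ⟨S, h1, -, rfl⟩ := h
  exact isOpen_sUnion fun s hs => (h1 s hs).1

lemma Good.mono {K : Type*} [MetricSpace K] {δ : ℝ} {U V : Set K} (h : Good δ U)
    (hV : IsOpen V) (hVU : V ⊆ U) : Good δ V := by
  obtain ⟨S, h1, h2, rfl⟩ := h
  refine ⟨(fun s => s ∩ V) '' S, ?_, ?_, ?_⟩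
  · rintro _ ⟨s, hs, rfl⟩
    exact ⟨(h1 s hs).1.inter hV, fun x hx y hy => (h1 s hs).2 x hx.1 y hy.1⟩
  · rintro _ ⟨s, hs, rfl⟩ _ ⟨t, ht, rfl⟩ ⟨x, hx, hx'⟩
    rw [h2 s hs t ht ⟨x, hx.1, hx'.1⟩]
  · ext x
    constructor
    · rintro ⟨_, ⟨s, hs, rfl⟩, hx⟩
      exact hx.2
    · intro hx
      obtain ⟨s, hs, hxs⟩ := hVU hx
      exact ⟨_, ⟨s, hs, rfl⟩, hxs, hx⟩

lemma Good.iUnion {K ι : Type*} [MetricSpace K] {δ : ℝ} {U : ι → Set K}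
    (h : ∀ i, Good δ (U i)) (hd : ∀ i j, (U i ∩ U j).Nonempty → i = j) :
    Good δ (⋃ i, U i) := by
  choose S h1 h2 h3 using h
  refine ⟨⋃ i, S i, ?_, ?_, ?_⟩
  · intro s hs
    obtain ⟨i, hi⟩ := mem_iUnion.1 hs
    exact h1 i s hi
  · intro s hs t ht ⟨x, hxs, hxt⟩
    obtain ⟨i, hi⟩ := mem_iUnion.1 hs
    obtain ⟨j, hj⟩ := mem_iUnion.1 ht
    have : i = j := hd i j ⟨x, (h3 i) ▸ ⟨s, hi, hxs⟩, (h3 j) ▸ ⟨t, hj, hxt⟩⟩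
    subst this
    exact h2 i s hi t hj ⟨x, hxs, hxt⟩
  · rw [sUnion_iUnion]
    exact iUnion_congr h3

lemma good_of_small {K : Type*} [MetricSpace K] {δ : ℝ} {U : Set K} (hU : IsOpen U)
    (h : ∀ x ∈ U, ∀ y ∈ U, dist x y < δ) : Good δ U :=
  ⟨{U}, by simpa using ⟨hU, h⟩, by simp, by simp⟩

/-- a fine finite open cover with bounded multiplicity -/
lemma exists_cover {K : Type*} [MetricSpace K] [CompactSpace K] (m : ℕ)
    (hm : topDim K = m) (δ : ℝ) (hδ : 0 < δ) :
    ∃ B : Finset (Set K), (∀ U ∈ B, IsOpen U ∧ ∀ x ∈ U, ∀ y ∈ U, dist x y < δ) ∧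
      (∀ x, ∃ U ∈ B, x ∈ U) ∧
      ∀ x, ∀ S ⊆ B, (∀ U ∈ S, x ∈ U) → S.card ≤ m + 1 := by
  classical
  have hα : IsOpenCover (range fun x : K => Metric.ball x (δ / 2)) := by
    refine ⟨?_, ?_⟩
    · rintro _ ⟨x, rfl⟩
      exact Metric.isOpen_ball
    · exact eq_univ_of_forall fun x => ⟨_, ⟨x, rfl⟩, Metric.mem_ball_self (by positivity)⟩
  have h1 : covD (range fun x : K => Metric.ball x (δ / 2)) < (m + 1 : ℕ) := by
    refine lt_of_le_of_lt (b := topDim K) ?_ ?_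
    · exact le_iSup₂ (f := fun (α : Set (Set K)) (_ : α ∈ {α | IsOpenCover α}) => covD α) _ hα
    · rw [hm]; exact_mod_cast Nat.lt_succ_self m
  unfold covD at h1
  simp only [iInf_lt_iff] at h1
  obtain ⟨β, ⟨hβ, href⟩, hord⟩ := h1
  obtain ⟨t, htβ, htf, htc⟩ := isCompact_univ.elim_finite_subcover_image (b := β) (c := id)
    (fun U hU => hβ.1 U hU) (by simp only [id]; rw [← sUnion_eq_biUnion, hβ.2])
  refine ⟨htf.toFinset, ?_, ?_, ?_⟩
  · intro U hU
    have hU := htβ (htf.mem_toFinset.1 hU)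
    refine ⟨hβ.1 U hU, fun x hx y hy => ?_⟩
    obtain ⟨_, ⟨z, rfl⟩, hz⟩ := href U hU
    have h1 := Metric.mem_ball.1 (hz hx)
    have h2 := Metric.mem_ball.1 (hz hy)
    have := dist_triangle_right x y z
    linarith
  · intro x
    obtain ⟨U, hU, hx⟩ := mem_iUnion₂.1 (htc (mem_univ x))
    exact ⟨U, htf.mem_toFinset.2 hU, hx⟩
  · intro x S hS hx
    by_contra! hc
    obtain ⟨S', hS', hcard⟩ := Finset.exists_subset_card_eq (n := m + 1 + 1) hc
    let e := S'.equivFinOfCardEq hcard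
    have : ((m + 1 : ℕ) : ℕ∞) ≤ ord β := by
      refine le_iSup₂ (f := fun (n : ℕ) (_ : n ∈ {n : ℕ | ∃ f : Fin (n + 1) → Set K,
        Function.Injective f ∧ (∀ i, f i ∈ β) ∧ (⋂ i, f i).Nonempty}) => (n : ℕ∞)) (m + 1) ?_
      refine ⟨fun i => (e.symm i : Set K), ?_, ?_, ?_⟩
      · exact Subtype.val_injective.comp e.symm.injective
      · exact fun i => htβ (htf.mem_toFinset.1 (hS (hS' (e.symm i).2)))
      · exact ⟨x, mem_iInter.2 fun i => hx _ (hS' (e.symm i).2)⟩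
    exact absurd hord (not_lt.2 this)

lemma ostrand_base {K : Type*} [MetricSpace K] [CompactSpace K] (m : ℕ)
    (hm : topDim K = m) (δ : ℝ) (hδ : 0 < δ) :
    ∃ U : ℕ → Set K, (∀ c, Good δ (U c)) ∧ ∀ x, ∃ c < m + 1, x ∈ U c := by
  classical
  obtain ⟨B, hB, hcov, hmul⟩ := exists_cover m hm δ hδ
  let φ : Set K → K → ℝ≥0∞ := fun U x => Metric.infEDist x Uᶜ
  have hφ : ∀ U, Continuous (φ U) := fun U => Metric.continuous_infEDist
  have hpos : ∀ U ∈ B, ∀ x, 0 < φ U x ↔ x ∈ U := by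
    intro U hU x
    have : IsClosed Uᶜ := (hB U hU).1.isClosed_compl
    rw [pos_iff_ne_zero, Ne, ← Metric.mem_iff_infEDist_zero_of_closed this]
    simp
  let V : Finset (Set K) → Set K := fun S =>
    (⋂ i ∈ S, {x | 0 < φ i x}) ∩ ⋂ i ∈ S, ⋂ j ∈ B \ S, {x | φ j x < φ i x}
  have hV : ∀ S, IsOpen (V S) := by
    intro S
    refine IsOpen.inter ?_ ?_
    · exact isOpen_biInter_finset fun i _ => isOpen_lt continuous_const (hφ i)
    · exact isOpen_biInter_finset fun i _ => isOpen_biInter_finset fun j _ =>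
        isOpen_lt (hφ j) (hφ i)
  refine ⟨fun c => ⋃ S : {S // S ∈ B.powersetCard (c + 1)}, V S, ?_, ?_⟩
  · intro c
    refine Good.iUnion ?_ ?_
    · rintro ⟨S, hS⟩
      rw [Finset.mem_powersetCard] at hS
      obtain ⟨i, hi⟩ : S.Nonempty := Finset.card_pos.1 (by omega)
      have hsub : V S ⊆ i := fun x hx => (hpos i (hS.1 hi) x).1 (mem_iInter₂.1 hx.1 i hi)
      exact good_of_small (hV S) fun x hx y hy => (hB i (hS.1 hi)).2 x (hsub hx) y (hsub hy)
    · rintro ⟨S, hS⟩ ⟨T, hT⟩ ⟨x, hxS, hxT⟩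
      rw [Finset.mem_powersetCard] at hS hT
      by_contra hne
      have hne : S ≠ T := fun h => hne (Subtype.ext h)
      have h1 : ¬ S ⊆ T := fun h => hne (Finset.eq_of_subset_of_card_le h (by omega))
      have h2 : ¬ T ⊆ S := fun h => hne (Finset.eq_of_subset_of_card_le h (by omega)).symm
      obtain ⟨a, haS, haT⟩ := Finset.not_subset.1 h1
      obtain ⟨b, hbT, hbS⟩ := Finset.not_subset.1 h2
      have e1 : φ b x < φ a x := mem_iInter₂.1 (mem_iInter₂.1 hxS.2 a haS) b
        (Finset.mem_sdiff.2 ⟨hT.1 hbT, hbS⟩)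
      have e2 : φ a x < φ b x := mem_iInter₂.1 (mem_iInter₂.1 hxT.2 b hbT) a
        (Finset.mem_sdiff.2 ⟨hS.1 haS, haT⟩)
      exact lt_asymm e1 e2
  · intro x
    let S := B.filter (fun U => x ∈ U)
    have hS : S.card ≤ m + 1 := hmul x S (Finset.filter_subset _ _)
      fun U hU => (Finset.mem_filter.1 hU).2
    have hS0 : 0 < S.card := by
      obtain ⟨U, hU, hx⟩ := hcov x
      exact Finset.card_pos.2 ⟨U, Finset.mem_filter.2 ⟨hU, hx⟩⟩
    refine ⟨S.card - 1, by omega, mem_iUnion.2 ⟨⟨S, ?_⟩, ?_, ?_⟩⟩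
    · exact Finset.mem_powersetCard.2 ⟨Finset.filter_subset _ _, by omega⟩
    · refine mem_iInter₂.2 fun i hi => ?_
      obtain ⟨h1, h2⟩ := Finset.mem_filter.1 hi
      exact (hpos i h1 x).2 h2
    · refine mem_iInter₂.2 fun i hi => mem_iInter₂.2 fun j hj => ?_
      obtain ⟨h1, h2⟩ := Finset.mem_filter.1 hi
      obtain ⟨h3, h4⟩ := Finset.mem_sdiff.1 hj
      have h5 : ¬ 0 < φ j x := fun h => h4 (Finset.mem_filter.2 ⟨h3, (hpos j h3 x).1 h⟩)
      have h6 : φ j x = 0 := by simpa using h5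
      show φ j x < φ i x
      rw [h6]
      exact (hpos i h1 x).2 h2

lemma ostrand {K : Type*} [MetricSpace K] [CompactSpace K] (m : ℕ)
    (hm : topDim K = m) (δ : ℝ) (hδ : 0 < δ) (j : ℕ) :
    ∃ U : ℕ → Set K, (∀ c, Good δ (U c)) ∧
      ∀ x, ∃ J ∈ (Finset.range (m + 1 + j)).powersetCard (j + 1), ∀ c ∈ J, x ∈ U c := by
  classical
  induction j with
  | zero =>
    obtain ⟨U, h1, h2⟩ := ostrand_base m hm δ hδ
    refine ⟨U, h1, fun x => ?_⟩
    obtain ⟨c, hc, hx⟩ := h2 x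
    exact ⟨{c}, by simpa using hc, by simpa using hx⟩
  | succ j ih =>
    obtain ⟨U, hU, hcov⟩ := ih
    set k := m + 1 + j with hk
    let ι := {J // J ∈ (Finset.range k).powersetCard (j + 1)}
    have hfin : Finite ι := inferInstanceAs (Finite {J // J ∈ (Finset.range k).powersetCard (j + 1)})
    have hι : ∀ J : ι, J.1 ⊆ Finset.range k ∧ J.1.card = j + 1 :=
      fun J => Finset.mem_powersetCard.1 J.2
    obtain ⟨W, hWc, hWo, hWs⟩ := exists_iUnion_eq_closure_subset
      (u := fun J : ι => ⋂ c ∈ J.1, U c)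
      (fun J => isOpen_biInter_finset fun c _ => (hU c).isOpen)
      (fun x => Set.toFinite _)
      (eq_univ_of_forall fun x => by
        obtain ⟨J, hJ, hx⟩ := hcov x
        exact mem_iUnion.2 ⟨⟨J, hJ⟩, mem_iInter₂.2 hx⟩)
    let V : ℕ → Set K := fun c => ⋃ J : {J : ι // c ∈ J.1}, W J
    let F : ℕ → Set K := fun c => ⋃ J : {J : ι // c ∈ J.1}, closure (W J)
    have hVo : ∀ c, IsOpen (V c) := fun c => isOpen_iUnion fun J => hWo _
    have hFc : ∀ c, IsClosed (F c) := fun c => isClosed_iUnion_of_finite fun J => isClosed_closure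
    have hVF : ∀ c, V c ⊆ F c := fun c => iUnion_mono fun J => subset_closure
    have hFU : ∀ c, F c ⊆ U c := fun c => iUnion_subset fun J =>
      (hWs J).trans (biInter_subset_of_mem J.2)
    let N : ι → Set K := fun J => (⋂ c ∈ J.1, V c) ∩ ⋂ c ∈ Finset.range k \ J.1, (F c)ᶜ
    have hNo : ∀ J, IsOpen (N J) := fun J =>
      (isOpen_biInter_finset fun c _ => hVo c).inter
        (isOpen_biInter_finset fun c _ => (hFc c).isOpen_compl)
    have hN : Good δ (⋃ J, N J) := by
      refine Good.iUnion ?_ ?_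
      · intro J
        obtain ⟨c, hc⟩ : J.1.Nonempty := Finset.card_pos.1 (by rw [(hι J).2]; omega)
        exact (hU c).mono (hNo J) fun x hx => hFU c (hVF c (mem_iInter₂.1 hx.1 c hc))
      · rintro S T ⟨x, hxS, hxT⟩
        by_contra hne
        have hne : S.1 ≠ T.1 := fun h => hne (Subtype.ext h)
        have h1 : ¬ S.1 ⊆ T.1 := fun h =>
          hne (Finset.eq_of_subset_of_card_le h (by rw [(hι S).2, (hι T).2]))
        obtain ⟨a, haS, haT⟩ := Finset.not_subset.1 h1
        exact mem_iInter₂.1 hxT.2 a (Finset.mem_sdiff.2 ⟨(hι S).1 haS, haT⟩)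
          (hVF a (mem_iInter₂.1 hxS.1 a haS))
    refine ⟨fun c => if c = k then ⋃ J, N J else U c, ?_, ?_⟩
    · intro c
      dsimp only
      split_ifs
      · exact hN
      · exact hU c
    · intro x
      obtain ⟨J, hJ⟩ := mem_iUnion.1 (hWc ▸ mem_univ x : x ∈ ⋃ i, W i)
      have hxV : ∀ c ∈ J.1, x ∈ V c := fun c hc => mem_iUnion.2 ⟨⟨J, hc⟩, hJ⟩
      have hlt : ∀ c ∈ J.1, c < k := fun c hc => Finset.mem_range.1 ((hι J).1 hc)
      by_cases h : ∃ c ∈ Finset.range k \ J.1, x ∈ U c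
      · obtain ⟨c, hc, hx⟩ := h
        obtain ⟨hc1, hc2⟩ := Finset.mem_sdiff.1 hc
        have hc1 := Finset.mem_range.1 hc1
        refine ⟨insert c J.1, Finset.mem_powersetCard.2 ⟨?_, ?_⟩, ?_⟩
        · intro b hb
          rw [Finset.mem_range]
          rcases Finset.mem_insert.1 hb with rfl | hb
          · omega
          · have := hlt b hb; omega
        · rw [Finset.card_insert_of_notMem hc2, (hι J).2]
        · intro b hb
          dsimp only
          rcases Finset.mem_insert.1 hb with rfl | hb
          · rw [if_neg (by omega)]; exact hx
          · rw [if_neg (by have := hlt b hb; omega)]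
            exact hFU b (hVF b (hxV b hb))
      · have hkJ : k ∉ J.1 := fun hh => lt_irrefl _ (hlt k hh)
        refine ⟨insert k J.1, Finset.mem_powersetCard.2 ⟨?_, ?_⟩, ?_⟩
        · intro b hb
          rw [Finset.mem_range]
          rcases Finset.mem_insert.1 hb with rfl | hb
          · omega
          · have := hlt b hb; omega
        · rw [Finset.card_insert_of_notMem hkJ, (hι J).2]
        · intro b hb
          dsimp only
          rcases Finset.mem_insert.1 hb with rfl | hb
          · rw [if_pos rfl]
            refine mem_iUnion.2 ⟨J, mem_iInter₂.2 hxV, mem_iInter₂.2 fun c hc hx => ?_⟩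
            exact h ⟨c, hc, hFU c hx⟩
          · rw [if_neg (by have := hlt b hb; omega)]
            exact hFU b (hVF b (hxV b hb))

/-- product covers of low order -/
lemma exists_product_cover {K : Type*} [MetricSpace K] [CompactSpace K] (m : ℕ)
    (hm : topDim K = m) (δ : ℝ) (hδ : 0 < δ) (A : Finset ℤ) :
    ∃ β : Set (Set (ℤ → K)), IsOpenCover β ∧
      (∀ W ∈ β, ∀ x ∈ W, ∀ y ∈ W, ∀ i ∈ A, dist (x i) (y i) < δ) ∧
      ord β ≤ (A.card * m : ℕ) := by
  classical
  -- number of colours is `A.card * m + 1`, but at least `m + 1`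
  obtain ⟨U, hU, hcov⟩ : ∃ U : ℕ → Set K, (∀ c, Good δ (U c)) ∧
      ∀ x : ℤ → K, ∃ c < A.card * m + 1, ∀ i ∈ A, x i ∈ U c := by
    rcases A.eq_empty_or_nonempty with rfl | hA
    · refine ⟨fun _ => ∅, fun c => ⟨∅, by simp, by simp, by simp⟩, fun x => ⟨0, by simp, by simp⟩⟩
    have hA1 : 1 ≤ A.card := Finset.card_pos.2 hA
    obtain ⟨j, hj⟩ : ∃ j, A.card * m = m + j :=
      ⟨A.card * m - m, by have := Nat.le_mul_of_pos_left m hA1; omega⟩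
    obtain ⟨U, hU, hcov⟩ := ostrand m hm δ hδ j
    refine ⟨U, hU, fun x => ?_⟩
    by_contra! hcon
    have hbad : ∀ i, ((Finset.range (m + 1 + j)).filter (fun c => x i ∉ U c)).card ≤ m := by
      intro i
      obtain ⟨J, hJ, hx⟩ := hcov (x i)
      obtain ⟨hJ1, hJ2⟩ := Finset.mem_powersetCard.1 hJ
      have : (Finset.range (m + 1 + j)).filter (fun c => x i ∉ U c) ⊆
          Finset.range (m + 1 + j) \ J := by
        intro c hc
        obtain ⟨h1, h2⟩ := Finset.mem_filter.1 hc
        exact Finset.mem_sdiff.2 ⟨h1, fun h => h2 (hx c h)⟩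
      have := Finset.card_le_card this
      rw [Finset.card_sdiff_of_subset hJ1, hJ2, Finset.card_range] at this
      omega
    have hsub : Finset.range (m + 1 + j) ⊆
        A.biUnion fun i => (Finset.range (m + 1 + j)).filter (fun c => x i ∉ U c) := by
      intro c hc
      obtain ⟨i, hi, hx⟩ := hcon c (by have := Finset.mem_range.1 hc; omega)
      exact Finset.mem_biUnion.2 ⟨i, hi, Finset.mem_filter.2 ⟨hc, hx⟩⟩
    have h1 := Finset.card_le_card hsub
    have h2 := Finset.card_biUnion_le_card_mul A _ m (fun i _ => hbad i)
    rw [Finset.card_range] at h1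
    omega
  choose S hS1 hS2 hS3 using hU
  let fam : ℕ → Set (Set (ℤ → K)) := fun c =>
    {W | ∃ s : ℤ → Set K, (∀ i ∈ A, s i ∈ S c) ∧ W = ⋂ i ∈ A, {x | x i ∈ s i}}
  have hfam : ∀ c, ∀ W ∈ fam c, ∀ W' ∈ fam c, (W ∩ W').Nonempty → W = W' := by
    rintro c _ ⟨s, hs, rfl⟩ _ ⟨t, ht, rfl⟩ ⟨x, hx, hx'⟩
    refine iInter₂_congr fun i hi => ?_
    rw [hS2 c (s i) (hs i hi) (t i) (ht i hi)
      ⟨x i, mem_iInter₂.1 hx i hi, mem_iInter₂.1 hx' i hi⟩]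
  refine ⟨⋃ c ∈ Finset.range (A.card * m + 1), fam c, ⟨?_, ?_⟩, ?_, ?_⟩
  · intro W hW
    obtain ⟨c, hc, s, hs, rfl⟩ := mem_iUnion₂.1 hW
    exact isOpen_biInter_finset fun i hi => (hS1 c _ (hs i hi)).1.preimage (continuous_apply i)
  · refine eq_univ_of_forall fun x => ?_
    obtain ⟨c, hc, hx⟩ := hcov x
    have : ∀ i, ∃ s, i ∈ A → s ∈ S c ∧ x i ∈ s := by
      intro i
      by_cases hi : i ∈ A
      · have := hx i hi
        rw [← hS3 c] at this
        obtain ⟨s, hs, hxs⟩ := this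
        exact ⟨s, fun _ => ⟨hs, hxs⟩⟩
      · exact ⟨∅, fun h => absurd h hi⟩
    choose s hs using this
    exact ⟨_, mem_iUnion₂.2 ⟨c, Finset.mem_range.2 hc, s, fun i hi => (hs i hi).1, rfl⟩,
      mem_iInter₂.2 fun i hi => (hs i hi).2⟩
  · intro W hW x hx y hy i hi
    obtain ⟨c, hc, s, hs, rfl⟩ := mem_iUnion₂.1 hW
    exact (hS1 c _ (hs i hi)).2 _ (mem_iInter₂.1 hx i hi) _ (mem_iInter₂.1 hy i hi)
  · refine iSup₂_le fun n hn => ?_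
    obtain ⟨f, hf, hfβ, x, hx⟩ := hn
    by_contra hlt
    have hlt : A.card * m < n := by
      rw [not_le] at hlt
      exact_mod_cast hlt
    have : ∀ i, ∃ c ∈ Finset.range (A.card * m + 1), f i ∈ fam c := by
      intro i
      obtain ⟨c, hc, h⟩ := mem_iUnion₂.1 (hfβ i)
      exact ⟨c, hc, h⟩
    choose g hg hgf using this
    obtain ⟨a, -, b, -, hab, hgab⟩ := Finset.exists_ne_map_eq_of_card_lt_of_maps_to
      (s := (Finset.univ : Finset (Fin (n + 1)))) (t := Finset.range (A.card * m + 1))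
      (by simpa using hlt) (f := g) (fun i _ => hg i)
    refine hab (hf (hfam (g a) _ (hgf a) _ (hgab ▸ hgf b) ⟨x, ?_, ?_⟩))
    · exact mem_iInter.1 hx a
    · exact mem_iInter.1 hx b

lemma exists_window {K : Type*} [MetricSpace K] [CompactSpace K]
    (d : (ℤ → K) → (ℤ → K) → ℝ) (hd : IsCompatMetric d) (ε : ℝ) (hε : 0 < ε) :
    ∃ M : ℕ, ∃ δ > 0, ∀ x y : ℤ → K,
      (∀ i ∈ Finset.Ico (-M : ℤ) (M + 1), dist (x i) (y i) < δ) → d x y < ε := by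
  have h1 : {p : (ℤ → K) × (ℤ → K) | d p.1 p.2 < ε} ∈ uniformity (ℤ → K) := by
    rw [← nhdsSet_diagonal_eq_uniformity, mem_nhdsSet_iff_forall]
    rintro ⟨x, y⟩ hxy
    obtain rfl : x = y := hxy
    have hopen : IsOpen {y | d x y < ε / 2} := by
      rw [hd.isOpen_iff]
      intro y hy
      refine ⟨ε / 2 - d x y, sub_pos.2 hy, fun z hz => ?_⟩
      have := hd.triangle x y z
      show d x z < ε / 2
      linarith
    have hx : {y | d x y < ε / 2} ∈ nhds x := hopen.mem_nhds (by
      show d x x < ε / 2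
      rw [hd.refl]; positivity)
    filter_upwards [prod_mem_nhds hx hx] with p hp
    have h1 : d x p.1 < ε / 2 := hp.1
    have h2 : d x p.2 < ε / 2 := hp.2
    have := hd.triangle p.1 x p.2
    rw [hd.symm p.1 x] at this
    show d p.1 p.2 < ε
    linarith
  rw [Pi.uniformity] at h1
  have hb := Filter.HasBasis.iInf' (fun i : ℤ => (Metric.uniformity_basis_dist (α := K)).comap
    (fun a : (ℤ → K) × (ℤ → K) => (a.1 i, a.2 i)))
  obtain ⟨⟨I, r⟩, ⟨hI, hr⟩, hsub⟩ := hb.mem_iff.1 h1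
  simp only at hI hr hsub
  obtain ⟨M, hM⟩ : ∃ M : ℕ, ∀ i ∈ I, i ∈ Finset.Ico (-M : ℤ) (M + 1) := by
    refine ⟨hI.toFinset.sup Int.natAbs, fun i hi => ?_⟩
    have := Finset.le_sup (f := Int.natAbs) (hI.mem_toFinset.2 hi)
    rw [Finset.mem_Ico]
    omega
  obtain ⟨δ, hδ, hδr⟩ : ∃ δ > 0, ∀ i ∈ I, δ ≤ r i := by
    rcases I.eq_empty_or_nonempty with rfl | hne
    · exact ⟨1, one_pos, by simp⟩
    · obtain ⟨a, ha, hmin⟩ := Set.exists_min_image I r hI hne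
      exact ⟨r a, hr a ha, hmin⟩
  refine ⟨M, δ, hδ, fun x y h => ?_⟩
  exact hsub (a := (x, y)) (mem_iInter₂.2 fun i hi => (h i (hM i hi)).trans_le (hδr i hi))

lemma shift_iterate {K : Type*} (n : ℕ) (x : ℤ → K) (i : ℤ) :
    (shift K)^[n] x i = x (i + n) := by
  induction n generalizing x with
  | zero => simp
  | succ n ih =>
    rw [Function.iterate_succ_apply, ih]
    simp only [shift]
    congr 1
    push_cast
    ring

lemma widim_le {K : Type*} [MetricSpace K] [CompactSpace K]
    (d : (ℤ → K) → (ℤ → K) → ℝ) (hd : IsCompatMetric d) (m : ℕ) (hm : topDim K = m)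
    (ε : ℝ) (hε : 0 < ε) :
    ∃ L : ℕ, ∀ n : ℕ, widim ε (dynDist d (shift K) n) ≤ ((n + L) * m : ℕ) := by
  obtain ⟨M, δ, hδ, hM⟩ := exists_window d hd (ε / 2) (by positivity)
  refine ⟨2 * M + 1, fun n => ?_⟩
  obtain ⟨β, hβ, hsmall, hord⟩ := exists_product_cover m hm δ hδ
    (Finset.Ico (-M : ℤ) (n + M + 1))
  have hcard : (Finset.Ico (-M : ℤ) (n + M + 1)).card = n + (2 * M + 1) := by
    rw [Int.card_Ico]; omega
  rw [hcard] at hord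
  have hmesh : mesh (dynDist d (shift K) n) β ≤ ε / 2 := by
    refine Real.sSup_le ?_ (by positivity)
    rintro _ ⟨W, hW, rfl⟩
    refine Real.sSup_le ?_ (by positivity)
    rintro _ ⟨x, hx, y, hy, rfl⟩
    refine Real.sSup_le ?_ (by positivity)
    rintro _ ⟨i, hi, rfl⟩
    refine (hM _ _ fun j hj => ?_).le
    rw [shift_iterate, shift_iterate]
    refine hsmall W hW x hx y hy _ ?_
    rw [Finset.mem_Ico] at hj ⊢
    omega
  calc widim ε (dynDist d (shift K) n) ≤ covD β := by
        exact iInf₂_le (f := fun (α : Set (Set (ℤ → K)))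
          (_ : α ∈ {α | IsOpenCover α ∧ mesh (dynDist d (shift K) n) α < ε}) => covD α) β
          ⟨hβ, by linarith⟩
    _ ≤ ord β := by
        exact iInf₂_le (f := fun (γ : Set (Set (ℤ → K)))
          (_ : γ ∈ {γ | IsOpenCover γ ∧ Refines γ β}) => ord γ) β
          ⟨hβ, fun V hV => ⟨V, hV, Subset.rfl⟩⟩
    _ ≤ _ := hord

/-- for every compact metric space `K`, the mean dimension of the full
shift on the alphabet `K` is at most `dim K`. -/
theorem mdim_fullshift_le {K : Type*} [MetricSpace K] [CompactSpace K]
    (d : (ℤ → K) → (ℤ → K) → ℝ) (hd : IsCompatMetric d) :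
    mdim (shift K) d ≤ (topDim K : ℝ≥0∞) := by
  rcases eq_or_ne (topDim K) ⊤ with htop | htop
  · rw [htop]; simp
  obtain ⟨m, hm⟩ := ENat.ne_top_iff_exists.1 htop
  refine iSup₂_le fun ε hε => ?_
  obtain ⟨L, hL⟩ := widim_le d hd m hm.symm ε hε
  rw [← hm]
  have hlim : Tendsto (fun n : ℕ => (m : ℝ≥0∞) + ((L * m : ℕ) : ℝ≥0∞) / (n : ℝ≥0∞)) atTop
      (nhds ((m : ℝ≥0∞) + 0)) := by
    refine Tendsto.const_add _ ?_
    have := ENNReal.Tendsto.const_div (a := ((L * m : ℕ) : ℝ≥0∞)) ENNReal.tendsto_nat_nhds_top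
      (Or.inr (ENNReal.natCast_ne_top _))
    simpa using this
  rw [add_zero] at hlim
  have key : Filter.liminf (fun n : ℕ =>
      (widim ε (dynDist d (shift K) n) : ℝ≥0∞) / (n : ℝ≥0∞)) Filter.atTop ≤ (m : ℝ≥0∞) := by
    rw [← hlim.liminf_eq]
    refine Filter.liminf_le_liminf ?_
    filter_upwards [eventually_gt_atTop 0] with n hn
    have h1 : (widim ε (dynDist d (shift K) n) : ℝ≥0∞) ≤ (((n + L) * m : ℕ) : ℝ≥0∞) := by
      have := ENat.toENNReal_le.2 (hL n)
      simpa only [ENat.toENNReal_coe] using this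
    have hn0 : (n : ℝ≥0∞) ≠ 0 := by exact_mod_cast hn.ne'
    refine (ENNReal.div_le_div_right h1 _).trans (le_of_eq ?_)
    rw [add_mul, Nat.cast_add, ENNReal.add_div, Nat.cast_mul n m, mul_comm (n : ℝ≥0∞),
      ENNReal.mul_div_cancel_right hn0 (ENNReal.natCast_ne_top _)]
  simpa only [ENat.toENNReal_coe] using key

end MeanDimPaper
end

section
/- For every positive integer D, the full shift σ on the alphabet [0,1]^D, i.e. the map σ: ([0,1]^D)^ℤ → ([0,1]^D)^ℤ defined by σ((xₙ)_{n∈ℤ}) = (x_{n+1})_{n∈ℤ}, has mean dimension mdim(([0,1]^D)^ℤ, σ) = D. -/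
open Filter Set
open scoped ENNReal

namespace MeanDimPaper

variable {X : Type*} [TopologicalSpace X]

/-- Vertices of the Freudenthal simplex with base `p` and permutation `π`. -/
def vtx {N : ℕ} (p : Fin N → ℕ) (π : Equiv.Perm (Fin N)) (j : ℕ) : Fin N → ℕ :=
  fun i => p i + if (π.symm i : ℕ) < j then 1 else 0

/-- The determinant detecting fully labelled simplices. -/
noncomputable def HH {N : ℕ} (f : (Fin N → ℕ) → Fin N → ZMod 2) (p : Fin N → ℕ)
    (π : Equiv.Perm (Fin N)) : ZMod 2 :=
  Matrix.det (Matrix.of fun (a b : Fin (N+1)) =>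
    (Fin.cons 1 (f (vtx p π a)) : Fin (N+1) → ZMod 2) b)

noncomputable def GG {N : ℕ} (f : (Fin N → ℕ) → Fin N → ZMod 2) (p : Fin N → ℕ)
    (π : Equiv.Perm (Fin N)) (j : Fin (N+1)) : ZMod 2 :=
  Matrix.det (Matrix.of fun (a b : Fin N) => f (vtx p π (j.succAbove a)) b)

lemma HH_eq {N : ℕ} (f : (Fin N → ℕ) → Fin N → ZMod 2) (p : Fin N → ℕ)
    (π : Equiv.Perm (Fin N)) : HH f p π = ∑ j, GG f p π j := by
  unfold HH GG
  rw [Matrix.det_succ_column_zero]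
  refine Finset.sum_congr rfl fun i _ => ?_
  have : (-1 : ZMod 2) = 1 := by decide
  rw [this, one_pow]
  simp only [Matrix.of_apply, Fin.cons_zero, one_mul]
  congr 1

/-- Facets sharing. -/
def ww {n : ℕ} (q : Fin (n+1) → ℕ) (π : Equiv.Perm (Fin (n+1))) (a : ℕ) : Fin (n+1) → ℕ :=
  fun x => q x + if 0 < (π.symm x : ℕ) ∧ (π.symm x : ℕ) < a + 1 then 1 else 0

noncomputable def GW {n : ℕ} (f : (Fin (n+1) → ℕ) → Fin (n+1) → ZMod 2) (q : Fin (n+1) → ℕ)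
    (π : Equiv.Perm (Fin (n+1))) : ZMod 2 :=
  Matrix.det (Matrix.of fun (a b : Fin (n+1)) => f (ww q π a) b)

lemma sum_mid {n : ℕ} (f : (Fin (n+1) → ℕ) → Fin (n+1) → ZMod 2) (p : Fin (n+1) → ℕ) (i : Fin n) :
    ∑ π, GG f p π (i.castSucc.succ) = 0 := by
  have hsw : ∀ π : Equiv.Perm (Fin (n+1)),
      GG f p (π * Equiv.swap i.castSucc i.succ) (i.castSucc.succ) = GG f p π (i.castSucc.succ) := by
    intro π
    unfold GG
    congr 2
    funext a b
    refine congrFun (congrArg f ?_) b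
    unfold vtx
    funext x
    congr 1
    have hne : ((i.castSucc.succ).succAbove a : ℕ) ≠ i + 1 := by
      have := Fin.succAbove_ne (i.castSucc.succ) a
      intro h
      exact this (Fin.ext (by simpa using h))
    generalize ((i.castSucc.succ).succAbove a : ℕ) = c at hne
    have : (π * Equiv.swap i.castSucc i.succ).symm x = Equiv.swap i.castSucc i.succ (π.symm x) := by
      rw [Equiv.symm_apply_eq]; simp
    rw [this]
    generalize π.symm x = y
    rcases eq_or_ne y i.castSucc with rfl | h1
    · rw [Equiv.swap_apply_left]; simp
      congr 1
      simp; omega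
    rcases eq_or_ne y i.succ with rfl | h2
    · rw [Equiv.swap_apply_right]; simp
      congr 1
      simp; omega
    rw [Equiv.swap_apply_of_ne_of_ne h1 h2]
  refine Finset.sum_involution (fun π _ => π * Equiv.swap i.castSucc i.succ) ?_ ?_ ?_ ?_
  · intro π _
    rw [hsw]; exact CharTwo.add_self_eq_zero _
  · intro π _ _ h
    have : Equiv.swap i.castSucc i.succ = 1 := by simpa using h
    rw [Equiv.swap_eq_one_iff] at this
    exact absurd (congrArg Fin.val this) (by simp)
  · intros; simp
  · intro π _; simp [mul_assoc]

lemma GG_zero {n : ℕ} (f : (Fin (n+1) → ℕ) → Fin (n+1) → ZMod 2) (p : Fin (n+1) → ℕ)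
    (π : Equiv.Perm (Fin (n+1))) : GG f p π 0 = GW f (p + Pi.single (π 0) 1) π := by
  unfold GG GW
  congr 2
  funext a b
  refine congrFun (congrArg f ?_) b
  funext x
  simp only [vtx, ww, Fin.zero_succAbove, Fin.val_succ, Pi.add_apply]
  rcases eq_or_ne x (π 0) with rfl | h
  · simp
  · have : 0 < (π.symm x : ℕ) := by
      rw [Nat.pos_iff_ne_zero]
      intro h0
      apply h
      rw [← Equiv.symm_apply_eq]
      exact Fin.ext h0
    simp [h, this]

lemma GG_last {n : ℕ} (f : (Fin (n+1) → ℕ) → Fin (n+1) → ZMod 2) (p : Fin (n+1) → ℕ)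
    (π : Equiv.Perm (Fin (n+1))) : GG f p (π * finRotate (n+1)) (Fin.last _) = GW f p π := by
  unfold GG GW
  congr 2
  funext a b
  refine congrFun (congrArg f ?_) b
  funext x
  simp only [vtx, ww, Fin.succAbove_last, Fin.val_castSucc]
  congr 1
  obtain ⟨y, hy⟩ : ∃ y, y = (π * finRotate (n+1)).symm x := ⟨_, rfl⟩
  have hx : π.symm x = finRotate (n+1) y := by
    rw [hy, Equiv.symm_apply_eq]
    exact ((π * finRotate (n+1)).apply_symm_apply x).symm
  rw [← hy, hx]
  rcases Fin.eq_castSucc_or_eq_last y with ⟨z, rfl⟩ | rfl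
  · rw [finRotate_apply]
    simp [Fin.coeSucc_eq_succ]
  · rw [finRotate_last]
    have := a.2
    simp; omega

lemma ww_pi0 {n : ℕ} (q : Fin (n+1) → ℕ) (π : Equiv.Perm (Fin (n+1))) (a : ℕ) :
    ww q π a (π 0) = q (π 0) := by simp [ww]

lemma tele {n k : ℕ} (F : (Fin (n+1) → ℕ) → ZMod 2) (i : Fin (n+1)) :
    ∑ p : Fin (n+1) → Fin k, (F ((fun x => (p x : ℕ)) + Pi.single i 1) + F (fun x => (p x : ℕ))) =
    ∑ q : Fin n → Fin k, (F (i.insertNth k (fun x => (q x : ℕ))) +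
      F (i.insertNth 0 (fun x => (q x : ℕ)))) := by
  rw [← (Fin.insertNthEquiv (fun _ => Fin k) i).sum_comp, Fintype.sum_prod_type_right]
  refine Finset.sum_congr rfl fun q _ => ?_
  have e1 : ∀ c : Fin k, (fun x => ((Fin.insertNthEquiv (fun _ => Fin k) i (c, q)) x : ℕ)) =
      (i.insertNth (c : ℕ) (fun x => (q x : ℕ)) : Fin (n+1) → ℕ) := by
    intro c
    funext x
    refine Fin.succAboveCases i ?_ ?_ x <;> simp
  have e2 : ∀ c : ℕ, (i.insertNth c (fun x => (q x : ℕ)) : Fin (n+1) → ℕ) + Pi.single i 1 =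
      (i.insertNth (c+1) (fun x => (q x : ℕ)) : Fin (n+1) → ℕ) := by
    intro c
    funext x
    refine Fin.succAboveCases i ?_ ?_ x <;> simp
  simp only [e1, e2]
  rw [Fin.sum_univ_eq_sum_range (fun c : ℕ => F (i.insertNth (c+1) (fun x => (q x : ℕ))) +
    F (i.insertNth c (fun x => (q x : ℕ))))]
  have := Finset.sum_range_sub (fun c : ℕ => F (i.insertNth c (fun x => (q x : ℕ)))) k
  simpa only [CharTwo.sub_eq_add] using this

lemma sum_HH {n k : ℕ} (f : (Fin (n+1) → ℕ) → Fin (n+1) → ZMod 2) :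
    ∑ p : Fin (n+1) → Fin k, ∑ π, HH f (fun x => (p x : ℕ)) π =
    ∑ π : Equiv.Perm (Fin (n+1)), ∑ q : Fin n → Fin k,
      (GW f ((π 0).insertNth k (fun x => (q x : ℕ))) π +
      GW f ((π 0).insertNth 0 (fun x => (q x : ℕ))) π) := by
  have ht : ∀ π : Equiv.Perm (Fin (n+1)), _ := fun π => tele (k := k) (fun p => GW f p π) (π 0)
  simp only [← ht]
  rw [Finset.sum_comm (s := (Finset.univ : Finset (Equiv.Perm (Fin (n+1)))))]
  refine Finset.sum_congr rfl fun p _ => ?_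
  simp only [HH_eq, Fin.sum_univ_succ (n := n + 1), Fin.sum_univ_castSucc (n := n)]
  rw [Finset.sum_add_distrib, Finset.sum_add_distrib, Finset.sum_comm]
  rw [Finset.sum_eq_zero (s := (Finset.univ : Finset (Fin n))) (fun i _ => sum_mid f _ i), zero_add,
    Finset.sum_add_distrib]
  congr 1
  · exact Finset.sum_congr rfl fun π _ => GG_zero f _ π
  · rw [← Equiv.sum_comp (Equiv.mulRight (finRotate (n+1)))]
    refine Finset.sum_congr rfl fun π _ => ?_
    rw [← GG_last]; rfl

theorem sum_HH_eq_one {k : ℕ} (hk : 0 < k) : ∀ {N : ℕ} (f : (Fin N → ℕ) → Fin N → ZMod 2)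
    (_ : ∀ p, (∀ i, p i ≤ k) → ∀ i, p i = k → f p i = 0)
    (_ : ∀ p, (∀ i, p i ≤ k) → ∀ i, p i = 0 → (∀ j < i, f p j = 0) ∧ ∑ j, f p j = 1),
    ∑ p : Fin N → Fin k, ∑ π, HH f (fun x => (p x : ℕ)) π = 1
  | 0, f, _, _ => by
    simp [HH]
  | n+1, f, h1, h0 => by
    rw [sum_HH]
    have hwle : ∀ (c : ℕ) (_ : c ≤ k) (π : Equiv.Perm (Fin (n+1))) (q : Fin n → Fin k) (a : ℕ) i,
        ww ((π 0).insertNth c (fun x => (q x : ℕ))) π a i ≤ k := by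
      intro c hc π q a i
      refine Fin.succAboveCases (π 0) ?_ ?_ i
      · rw [ww_pi0]; simpa using hc
      · intro j
        unfold ww
        have := (q j).2
        simp only [Fin.insertNth_apply_succAbove]
        split_ifs <;> omega
    have hk0 : ∀ (π : Equiv.Perm (Fin (n+1))) (q : Fin n → Fin k),
        GW f ((π 0).insertNth k (fun x => (q x : ℕ))) π = 0 := by
      intro π q
      refine Matrix.det_eq_zero_of_column_eq_zero (π 0) fun a => ?_
      refine h1 _ (hwle k le_rfl π q a) _ ?_
      rw [ww_pi0]; simp
    have h00 : ∀ (π : Equiv.Perm (Fin (n+1))) (q : Fin n → Fin k), π 0 ≠ 0 →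
        GW f ((π 0).insertNth 0 (fun x => (q x : ℕ))) π = 0 := by
      intro π q hπ
      refine Matrix.det_eq_zero_of_column_eq_zero 0 fun a => ?_
      refine (h0 _ (hwle 0 (Nat.zero_le _) π q a) (π 0) ?_).1 0 (Fin.pos_of_ne_zero hπ)
      rw [ww_pi0]; simp
    simp only [hk0, zero_add]
    set f' : (Fin n → ℕ) → Fin n → ZMod 2 := fun q j => f (Fin.cons 0 q) j.succ with hf'
    have hle : ∀ p : Fin n → ℕ, (∀ i, p i ≤ k) → ∀ i, (Fin.cons 0 p : Fin (n+1) → ℕ) i ≤ k := by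
      intro p hp i
      refine Fin.cases ?_ ?_ i
      · simp
      · intro j; simpa using hp j
    have ih := sum_HH_eq_one hk f'
      (fun p hp i hi => h1 _ (hle p hp) i.succ (by simpa using hi))
      (fun p hp i hi => by
        have := h0 _ (hle p hp) i.succ (by simpa using hi)
        refine ⟨fun j hj => this.1 j.succ (by simpa using hj), ?_⟩
        have h2 := this.2
        rw [Fin.sum_univ_succ, this.1 0 (Fin.succ_pos i), zero_add] at h2
        exact h2)
    rw [← ih, ← Equiv.Perm.decomposeFin.symm.sum_comp, Fintype.sum_prod_type,
      Finset.sum_eq_single 0 ?_ (by simp), Finset.sum_comm]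
    · refine Finset.sum_congr rfl fun q _ => Finset.sum_congr rfl fun σ _ => ?_
      have hπ0 : (Equiv.Perm.decomposeFin.symm ((0 : Fin (n+1)), σ)) 0 = 0 := by simp
      rw [hπ0]
      have hww : ∀ a : ℕ, ww ((0 : Fin (n+1)).insertNth 0 (fun x => (q x : ℕ)))
          (Equiv.Perm.decomposeFin.symm ((0 : Fin (n+1)), σ)) a =
          (Fin.cons 0 (vtx (fun x => (q x : ℕ)) σ a) : Fin (n+1) → ℕ) := by
        intro a
        funext x
        refine Fin.cases ?_ ?_ x
        · have := ww_pi0 ((0 : Fin (n+1)).insertNth 0 (fun x => (q x : ℕ)))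
            (Equiv.Perm.decomposeFin.symm ((0 : Fin (n+1)), σ)) a
          rw [hπ0] at this
          rw [this]; simp
        · intro y
          have : (Equiv.Perm.decomposeFin.symm ((0 : Fin (n+1)), σ)).symm y.succ =
              (σ.symm y).succ := by
            rw [Equiv.symm_apply_eq]; simp
          simp only [ww, this]
          simp [vtx]
      unfold GW HH
      have hM := Matrix.det_updateCol_sum (Matrix.of fun (a b : Fin (n+1)) =>
        f (ww ((0 : Fin (n+1)).insertNth 0 (fun x => (q x : ℕ)))
          (Equiv.Perm.decomposeFin.symm ((0 : Fin (n+1)), σ)) a) b) 0 (fun _ => 1)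
      rw [one_smul] at hM
      rw [← hM]
      congr 1
      ext a b
      refine Fin.cases ?_ ?_ b
      · have := hwle 0 (Nat.zero_le _) (Equiv.Perm.decomposeFin.symm ((0 : Fin (n+1)), σ)) q a
        rw [hπ0] at this
        have := (h0 _ this 0 (by rw [hww]; simp)).2
        simpa using this
      · intro c
        rw [Matrix.updateCol_ne (Fin.succ_ne_zero c)]
        simp only [Matrix.of_apply, hww, hf', Fin.cons_succ]
    · intro i _ hi
      refine Finset.sum_eq_zero fun σ _ => Finset.sum_eq_zero fun q _ => h00 _ q ?_
      simpa using hi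

/-- Kuhn's cubical Sperner lemma, in a form adapted to the Lebesgue covering theorem. -/
theorem kuhn {k N : ℕ} (hk : 0 < k) {A : Type*} (l : (Fin N → ℕ) → A) (φ : A → Fin N → Prop)
    (h1 : ∀ p, (∀ i, p i ≤ k) → ∀ i, p i = k → φ (l p) i)
    (h0 : ∀ p, (∀ i, p i ≤ k) → ∀ i, p i = 0 → ¬ φ (l p) i) :
    ∃ (p : Fin N → ℕ) (π : Equiv.Perm (Fin N)), (∀ i, p i < k) ∧
      Function.Injective (fun j : Fin (N+1) => l (vtx p π j)) := by
  classical
  let e : A → Fin N → ZMod 2 := fun a j => if (¬ φ a j ∧ ∀ m, j < m → φ a m) then 1 else 0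
  have key := sum_HH_eq_one hk (fun p => e (l p))
    (fun p hp i hi => by simp [e, h1 p hp i hi])
    (fun p hp i hi => by
      have hi' := h0 p hp i hi
      refine ⟨fun j hj => ?_, ?_⟩
      · have : ¬ (∀ m, j < m → φ (l p) m) := fun h => hi' (h i hj)
        simp [e, this]
      · let s : Finset (Fin N) := Finset.univ.filter fun j => ¬ φ (l p) j
        have hs : s.Nonempty := ⟨i, by simp [s, hi']⟩
        have hmem := s.max'_mem hs
        rw [Finset.sum_eq_single (s.max' hs)]
        · have : ∀ m, s.max' hs < m → φ (l p) m := by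
            intro m hm
            by_contra hc
            exact absurd (s.le_max' m (by simp [s, hc])) (not_le.2 hm)
          have h2 : ¬ φ (l p) (s.max' hs) := by simpa [s] using hmem
          exact if_pos ⟨h2, this⟩
        · intro b _ hb
          refine if_neg ?_
          rintro ⟨hb1, hb2⟩
          have hbs : b ∈ s := by simp [s, hb1]
          have hlt := lt_of_le_of_ne (s.le_max' b hbs) hb
          have h2 : ¬ φ (l p) (s.max' hs) := by simpa [s] using hmem
          exact h2 (hb2 _ hlt)
        · simp)
  obtain ⟨p, _, hp⟩ := Finset.exists_ne_zero_of_sum_ne_zero (by rw [key]; exact one_ne_zero)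
  obtain ⟨π, _, hπ⟩ := Finset.exists_ne_zero_of_sum_ne_zero hp
  refine ⟨fun x => p x, π, fun i => (p i).2, ?_⟩
  intro a b hab
  by_contra hne
  apply hπ
  unfold HH
  refine Matrix.det_zero_of_row_eq hne ?_
  funext c
  simp only [Matrix.of_apply]
  simp only at hab
  rw [hab]


/-- Lebesgue's covering theorem for the cube. -/
theorem lebesgue_cover {N : ℕ} {A : Type*} (U : A → Set (Fin N → unitInterval))
    (hU : ∀ a, IsOpen (U a)) (hc : ∀ x, ∃ a, x ∈ U a)
    (hf : ∀ a i x y, x ∈ U a → y ∈ U a → x i = 0 → y i = 1 → False) :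
    ∃ (x : Fin N → unitInterval) (g : Fin (N+1) → A), Function.Injective g ∧ ∀ j, x ∈ U (g j) := by
  obtain ⟨δ, hδ, hL⟩ := lebesgue_number_lemma_of_metric (s := Set.univ) (c := U) isCompact_univ hU
    (fun x _ => Set.mem_iUnion.2 (hc x))
  obtain ⟨k0, hk0⟩ := exists_nat_one_div_lt hδ
  let k : ℕ := k0 + 1
  have hkpos : (0 : ℝ) < k := by positivity
  let G : (Fin N → ℕ) → Fin N → unitInterval := fun p i =>
    Set.projIcc 0 1 zero_le_one ((p i : ℝ) / k)
  choose l hl using fun p => hL (G p) (Set.mem_univ _)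
  have hself : ∀ p, G p ∈ U (l p) := fun p => hl p (Metric.mem_ball_self hδ)
  obtain ⟨p, π, hp, hinj⟩ := kuhn (k := k) (Nat.succ_pos k0) l (fun a i => ∃ y ∈ U a, y i = 1)
    (by
      intro p _ i hi
      refine ⟨G p, hself p, ?_⟩
      simp only [G, hi, div_self hkpos.ne']
      exact Set.projIcc_right zero_le_one)
    (by
      rintro p _ i hi ⟨y, hy, hyi⟩
      refine hf _ i _ _ (hself p) hy ?_ hyi
      simp only [G, hi, Nat.cast_zero, zero_div]
      exact Set.projIcc_left zero_le_one)
  refine ⟨G p, _, hinj, fun j => hl _ ?_⟩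
  rw [Metric.mem_ball]
  refine lt_of_le_of_lt ?_ hk0
  rw [dist_pi_le_iff (by positivity)]
  intro i
  have h1 := abs_projIcc_sub_projIcc (a := (0:ℝ)) (b := 1) (c := (p i : ℝ) / k)
    (d := (vtx p π j i : ℝ) / k) zero_le_one
  refine h1.trans ?_
  rw [← sub_div, abs_div, abs_of_pos hkpos]
  have : (k : ℝ) = k0 + 1 := by simp [k]
  rw [← this]
  gcongr
  unfold vtx
  split_ifs <;> simp

lemma IsCompatMetric.continuous {X : Type*} [TopologicalSpace X] {d : X → X → ℝ}
    (hd : IsCompatMetric d) : Continuous fun p : X × X => d p.1 p.2 := by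
  let _ : PseudoMetricSpace X := PseudoMetricSpace.ofDistTopology d hd.refl hd.symm hd.triangle
    hd.isOpen_iff
  exact continuous_dist (α := X)

lemma IsCompatMetric.nonneg {X : Type*} [TopologicalSpace X] {d : X → X → ℝ}
    (hd : IsCompatMetric d) (x y : X) : 0 ≤ d x y := by
  have h1 := hd.triangle x y x
  rw [hd.refl, hd.symm y x] at h1
  linarith

lemma IsCompatMetric.bdd {X : Type*} [TopologicalSpace X] [CompactSpace X] {d : X → X → ℝ}
    (hd : IsCompatMetric d) : ∃ C, 0 ≤ C ∧ ∀ x y, d x y ≤ C := by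
  obtain ⟨C, hC⟩ := (isCompact_range hd.continuous).bddAbove
  refine ⟨max C 0, le_max_right _ _, fun x y => le_max_of_le_left (hC ⟨(x, y), rfl⟩)⟩

lemma shift_iter {K : Type*} (x : ℤ → K) (i : ℕ) (m : ℤ) : (shift K)^[i] x m = x (m + i) := by
  induction i generalizing x with
  | zero => simp
  | succ i ih =>
    rw [Function.iterate_succ_apply, ih]
    simp only [shift]
    congr 1
    push_cast; ring

/-- Uniform closeness in the product implies closeness in `d`. -/
lemma close_of_coords {D : ℕ}
    {d : (ℤ → (Fin D → unitInterval)) → (ℤ → (Fin D → unitInterval)) → ℝ}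
    (hd : IsCompatMetric d) {ε : ℝ} (hε : 0 < ε) :
    ∃ m : ℕ, ∀ x y : ℤ → (Fin D → unitInterval),
      (∀ i : ℤ, |i| ≤ m → ∀ j, |(x i j : ℝ) - y i j| ≤ 1 / ((m : ℝ) + 1)) → d x y < ε := by
  let X := ℤ → (Fin D → unitInterval)
  let C : ℕ → Set (X × X) := fun m => {q | ∀ i : ℤ, |i| ≤ m → ∀ j,
    |(q.1 i j : ℝ) - q.2 i j| ≤ 1 / ((m : ℝ) + 1)}
  have hCclosed : ∀ m, IsClosed (C m) := by
    intro m
    have : C m = ⋂ (i : ℤ) (_ : |i| ≤ m) (j : Fin D),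
        {q : X × X | |(q.1 i j : ℝ) - q.2 i j| ≤ 1 / ((m : ℝ) + 1)} := by
      ext q; simp [C]
    rw [this]
    refine isClosed_iInter fun i => isClosed_iInter fun _ => isClosed_iInter fun j => ?_
    refine isClosed_le ?_ continuous_const
    fun_prop
  have hanti : Antitone C := by
    intro a b hab q hq i hi j
    refine (hq i (hi.trans (by exact_mod_cast hab)) j).trans ?_
    gcongr
  have hK : IsCompact {q : X × X | ε ≤ d q.1 q.2} :=
    (isClosed_le continuous_const hd.continuous).isCompact
  have hdir : Directed (· ⊇ ·) C := hanti.directed_ge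
  obtain ⟨m, hm⟩ := hK.elim_directed_family_closed C hCclosed (by
    rw [Set.eq_empty_iff_forall_notMem]
    rintro ⟨x, y⟩ ⟨hq1, hq2⟩
    have hxy : x = y := by
      funext i j
      apply Subtype.ext
      have h : ∀ n : ℕ, |(x i j : ℝ) - y i j| ≤ 1 / ((n : ℝ) + 1) := by
        intro n
        refine (Set.mem_iInter.1 hq2 (max n i.natAbs) i ?_ j).trans ?_
        · push_cast; rw [Int.abs_eq_natAbs]; simp
        · have : (n : ℝ) ≤ (max n i.natAbs : ℕ) := by exact_mod_cast le_max_left _ _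
          gcongr
      have h0 : |(x i j : ℝ) - y i j| ≤ 0 :=
        ge_of_tendsto' tendsto_one_div_add_atTop_nhds_zero_nat h
      exact sub_eq_zero.1 (abs_nonpos_iff.1 h0)
    have hq3 : ε ≤ d x y := hq1
    rw [hxy, hd.refl] at hq3
    linarith) hdir
  refine ⟨m, fun x y h => ?_⟩
  by_contra hc
  have : (x, y) ∈ {q : X × X | ε ≤ d q.1 q.2} ∩ C m := ⟨not_lt.1 hc, h⟩
  rw [hm] at this
  exact this

/-- Points with opposite zeroth coordinates are uniformly separated. -/
lemma far_of_faces {D : ℕ} (hD : 0 < D)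
    {d : (ℤ → (Fin D → unitInterval)) → (ℤ → (Fin D → unitInterval)) → ℝ}
    (hd : IsCompatMetric d) :
    ∃ ε : ℝ, 0 < ε ∧ ∀ (x y : ℤ → (Fin D → unitInterval)) (j : Fin D),
      x 0 j = 0 → y 0 j = 1 → ε ≤ d x y := by
  let X := ℤ → (Fin D → unitInterval)
  let S : Set (X × X) := ⋃ j : Fin D, {q | q.1 0 j = 0 ∧ q.2 0 j = 1}
  have hS : IsCompact S := by
    refine IsClosed.isCompact ?_
    refine isClosed_iUnion_of_finite fun j => ?_
    refine IsClosed.inter ?_ ?_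
    · exact isClosed_eq (by fun_prop) continuous_const
    · exact isClosed_eq (by fun_prop) continuous_const
  have hne : S.Nonempty := ⟨(fun _ _ => 0, fun _ _ => 1), Set.mem_iUnion.2 ⟨⟨0, hD⟩, rfl, rfl⟩⟩
  obtain ⟨⟨x0, y0⟩, hmem, hmin⟩ := hS.exists_isMinOn hne hd.continuous.continuousOn
  refine ⟨d x0 y0, ?_, ?_⟩
  · refine lt_of_le_of_ne (hd.nonneg _ _) fun h => ?_
    have hxy := hd.eq_of _ _ h.symm
    obtain ⟨j, h0, h1⟩ := Set.mem_iUnion.1 hmem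
    simp only at h0 h1
    rw [hxy, h1] at h0
    exact one_ne_zero h0
  · intro x y j hx hy
    exact hmin (a := (x, y)) (Set.mem_iUnion.2 ⟨j, hx, hy⟩)

lemma dynDist_le {X : Type*} {d : X → X → ℝ} {C : ℝ} (hC : 0 ≤ C) (T : X → X) (n : ℕ) (x y : X)
    (h : ∀ i < n, d (T^[i] x) (T^[i] y) ≤ C) : dynDist d T n x y ≤ C := by
  refine Real.sSup_le ?_ hC
  rintro r ⟨i, hi, rfl⟩
  exact h i hi

lemma le_mesh {X : Type*} {d : X → X → ℝ} {C : ℝ} (hC : 0 ≤ C) (h : ∀ x y, d x y ≤ C)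
    {α : Set (Set X)} {V : Set X} (hV : V ∈ α) {x y : X} (hx : x ∈ V) (hy : y ∈ V) :
    d x y ≤ mesh d α := by
  have h1 : d x y ≤ diamD d V := by
    refine le_csSup ⟨C, ?_⟩ ⟨x, hx, y, hy, rfl⟩
    rintro r ⟨a, _, b, _, rfl⟩
    exact h a b
  have h2 : diamD d V ≤ mesh d α := by
    refine le_csSup ⟨C, ?_⟩ ⟨V, hV, rfl⟩
    rintro r ⟨W, _, rfl⟩
    refine Real.sSup_le ?_ hC
    rintro r ⟨a, _, b, _, rfl⟩
    exact h a b
  exact h1.trans h2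

lemma mesh_le {X : Type*} {d : X → X → ℝ} {C : ℝ} (hC : 0 ≤ C) {α : Set (Set X)}
    (h : ∀ V ∈ α, ∀ x ∈ V, ∀ y ∈ V, d x y ≤ C) : mesh d α ≤ C := by
  refine Real.sSup_le ?_ hC
  rintro r ⟨W, hW, rfl⟩
  refine Real.sSup_le ?_ hC
  rintro r ⟨a, ha, b, hb, rfl⟩
  exact h W hW a ha b hb

lemma widim_lower {D : ℕ} 
    {d : (ℤ → (Fin D → unitInterval)) → (ℤ → (Fin D → unitInterval)) → ℝ}
    (hd : IsCompatMetric d) {ε : ℝ}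
    (hε : ∀ (x y : ℤ → (Fin D → unitInterval)) (j : Fin D), x 0 j = 0 → y 0 j = 1 → ε ≤ d x y)
    (n : ℕ) : ((n * D : ℕ) : ℕ∞) ≤ widim ε (dynDist d (shift (Fin D → unitInterval)) n) := by
  obtain ⟨C, hC, hdC⟩ := hd.bdd
  set T := shift (Fin D → unitInterval) with hT
  refine le_iInf₂ fun α hα => le_iInf₂ fun β hβ => ?_
  obtain ⟨hαc, hαm⟩ := hα
  obtain ⟨hβc, hβα⟩ := hβ
  let E : (Fin (n * D) → unitInterval) → ℤ → (Fin D → unitInterval) := fun y i j =>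
    if h : i.toNat < n then y (finProdFinEquiv (⟨i.toNat, h⟩, j)) else 0
  have hE : Continuous E := by
    refine continuous_pi fun i => continuous_pi fun j => ?_
    by_cases h : i.toNat < n
    · simp only [E, h, dif_pos]; fun_prop
    · simp only [E, h, dif_neg, not_false_iff]; fun_prop
  obtain ⟨x, g, hg, hx⟩ := lebesgue_cover (A := β) (fun V => E ⁻¹' V.1)
    (fun V => (hβc.1 V.1 V.2).preimage hE)
    (fun x => by
      have : E x ∈ ⋃₀ β := by rw [hβc.2]; trivial
      obtain ⟨V, hV, hxV⟩ := this
      exact ⟨⟨V, hV⟩, hxV⟩)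
    (by
      intro V c x y hx hy hx0 hy1
      obtain ⟨⟨i, j⟩, rfl⟩ := finProdFinEquiv.surjective c
      obtain ⟨W, hW, hVW⟩ := hβα V.1 V.2
      have h1 := le_mesh (d := dynDist d T n) hC
        (fun x y => dynDist_le hC T n x y fun _ _ => hdC _ _) hW (hVW hx) (hVW hy)
      have h2 : d (T^[(i : ℕ)] (E x)) (T^[(i : ℕ)] (E y)) ≤ dynDist d T n (E x) (E y) := by
        refine le_csSup ⟨C, ?_⟩ ⟨i, i.2, rfl⟩
        rintro r ⟨a, _, rfl⟩
        exact hdC _ _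
      have h3 := hε (T^[(i : ℕ)] (E x)) (T^[(i : ℕ)] (E y)) j
        (by rw [hT, shift_iter]; simp [E, hx0]) (by rw [hT, shift_iter]; simp [E, hy1])
      linarith)
  refine le_iSup₂_of_le (n * D) ?_ le_rfl
  exact ⟨fun j => (g j).1, Subtype.val_injective.comp hg, fun j => (g j).2, E x,
    Set.mem_iInter.2 hx⟩

/-- Open stars of the Freudenthal triangulation, pulled back. -/
def star' {X ι : Type*} (F : X → ι → ℝ) (v : ι → ℤ) : Set X :=
  {x | ∃ t : ℝ, 0 < t ∧ t < 1 ∧ ∀ c, (v c : ℝ) < F x c + t ∧ F x c + t < v c + 1}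

lemma star_cover {X ι : Type*} [TopologicalSpace X] [Finite ι] (F : X → ι → ℝ)
    (hF : Continuous F) : IsOpenCover (Set.range (star' F)) := by
  constructor
  · rintro _ ⟨v, rfl⟩
    have : star' F v = ⋃ (t : ℝ) (_ : 0 < t ∧ t < 1),
        ⋂ c, {x | (v c : ℝ) < F x c + t} ∩ {x | F x c + t < v c + 1} := by
      ext x
      simp only [star', Set.mem_ofPred_eq, Set.mem_iUnion, Set.mem_iInter, Set.mem_inter_iff,
        exists_prop, and_assoc]
    rw [this]
    refine isOpen_iUnion fun t => isOpen_iUnion fun _ => isOpen_iInter_of_finite fun c => ?_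
    exact (isOpen_lt (by fun_prop) (by fun_prop)).inter (isOpen_lt (by fun_prop) (by fun_prop))
  · rw [Set.eq_univ_iff_forall]
    intro x
    have hcount : (⋃ c, Set.range fun z : ℤ => (z : ℝ) - F x c).Countable :=
      Set.countable_iUnion fun c => Set.countable_range _
    obtain ⟨t, ht, htn⟩ : ((Set.Ioo (0:ℝ) 1) \ (⋃ c, Set.range fun z : ℤ => (z : ℝ) - F x c)).Nonempty := by
      by_contra hcon
      rw [Set.not_nonempty_iff_eq_empty, Set.sdiff_eq_empty] at hcon
      have := hcount.mono hcon
      exact (Cardinal.Real.Ioo_countable_iff (x := 0) (y := 1)).1 this |>.not_gt zero_lt_one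
    refine ⟨_, ⟨fun c => ⌊F x c + t⌋, rfl⟩, t, ht.1, ht.2, fun c => ⟨?_, Int.lt_floor_add_one _⟩⟩
    refine lt_of_le_of_ne (Int.floor_le _) fun h => htn ?_
    refine Set.mem_iUnion.2 ⟨c, ⌊F x c + t⌋, ?_⟩
    simp only; rw [h]; ring

lemma star_ord {X ι : Type*} [TopologicalSpace X] [Fintype ι] (F : X → ι → ℝ) :
    ord (Set.range (star' F)) ≤ (Fintype.card ι : ℕ) := by
  refine iSup₂_le fun n hn => ?_
  obtain ⟨f, hf, hmem, x, hx⟩ := hn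
  choose v hv using hmem
  have hvinj : Function.Injective v := fun a b hab => hf (by rw [← hv a, ← hv b, hab])
  have hxv : ∀ i, x ∈ star' F (v i) := fun i => by rw [hv i]; exact Set.mem_iInter.1 hx i
  choose t ht0 ht1 ht using hxv
  have hfl : ∀ i c, v i c = ⌊F x c + t i⌋ := by
    intro i c
    symm
    rw [Int.floor_eq_iff]
    exact ⟨(ht i c).1.le, (ht i c).2⟩
  have hmono : ∀ i i', t i ≤ t i' → v i ≤ v i' := by
    intro i i' h c
    rw [hfl, hfl]
    exact Int.floor_mono (by linarith)
  have hsum : Function.Injective fun i => ∑ c, v i c := by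
    intro i i' h
    apply hvinj
    simp only at h
    rcases le_total (t i) (t i') with h1 | h1
    · have := (Finset.sum_eq_sum_iff_of_le (fun c _ => hmono _ _ h1 c)).1 h
      funext c; exact this c (Finset.mem_univ _)
    · have := (Finset.sum_eq_sum_iff_of_le (fun c _ => hmono _ _ h1 c)).1 h.symm
      funext c; exact (this c (Finset.mem_univ _)).symm
  have hrange : ∀ i ∈ (Finset.univ : Finset (Fin (n+1))), (fun i => ∑ c, v i c) i ∈
      Finset.Icc (∑ c, ⌊F x c⌋) (∑ c, ⌊F x c⌋ + Fintype.card ι) := by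
    intro i _
    rw [Finset.mem_Icc]
    constructor
    · refine Finset.sum_le_sum fun c _ => ?_
      rw [hfl]; exact Int.floor_mono (by linarith [ht0 i])
    · have : ∑ c, ⌊F x c⌋ + (Fintype.card ι : ℤ) = ∑ c, (⌊F x c⌋ + 1) := by
        rw [Finset.sum_add_distrib]; simp
      rw [this]
      refine Finset.sum_le_sum fun c _ => ?_
      rw [hfl, ← Int.floor_add_one]; exact Int.floor_mono (by linarith [ht1 i])
  have hcard := Finset.card_le_card_of_injOn _ hrange hsum.injOn
  rw [Finset.card_univ, Fintype.card_fin, Int.card_Icc] at hcard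
  have : n ≤ Fintype.card ι := by omega
  exact_mod_cast this

lemma star_close {X ι : Type*} (F : X → ι → ℝ) (v : ι → ℤ) {x y : X} (hx : x ∈ star' F v)
    (hy : y ∈ star' F v) (c : ι) : |F x c - F y c| ≤ 2 := by
  obtain ⟨t, ht0, ht1, ht⟩ := hx
  obtain ⟨s, hs0, hs1, hs⟩ := hy
  have h1 := ht c
  have h2 := hs c
  rw [abs_le]; constructor <;> linarith

lemma widim_upper {D : ℕ} 
    {d : (ℤ → (Fin D → unitInterval)) → (ℤ → (Fin D → unitInterval)) → ℝ}
    (hd : IsCompatMetric d) {ε : ℝ} (hε : 0 < ε) :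
    ∃ m : ℕ, ∀ n : ℕ, widim ε (dynDist d (shift (Fin D → unitInterval)) n) ≤
      (((n + m) * D : ℕ) : ℕ∞) := by
  obtain ⟨m, hm⟩ := close_of_coords hd (half_pos hε)
  refine ⟨2 * m + 1, fun n => ?_⟩
  set T := shift (Fin D → unitInterval) with hT
  let F : (ℤ → (Fin D → unitInterval)) → (Fin (n + (2 * m + 1)) × Fin D) → ℝ := fun x c =>
    (2 * ((m : ℝ) + 1)) * (x ((c.1 : ℤ) - m) c.2 : ℝ)
  have hF : Continuous F := by
    refine continuous_pi fun c => ?_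
    fun_prop
  have hmesh : mesh (dynDist d T n) (Set.range (star' F)) < ε := by
    refine lt_of_le_of_lt (mesh_le (half_pos hε).le ?_) (half_lt_self hε)
    rintro _ ⟨v, rfl⟩ x hx y hy
    refine dynDist_le (half_pos hε).le T n x y fun i hi => (hm _ _ fun z hz j => ?_).le
    rw [hT, shift_iter, shift_iter]
    rw [abs_le] at hz
    obtain ⟨s, hs⟩ : ∃ s : ℕ, (s : ℤ) = z + i + m := ⟨(z + i + m).toNat, by omega⟩
    have hs' : s < n + (2 * m + 1) := by omega
    have h := star_close F v hx hy (⟨s, hs'⟩, j)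
    have e : (s : ℤ) - m = z + i := by omega
    simp only [F, e] at h
    rw [← mul_sub, abs_mul, abs_of_pos (by positivity)] at h
    rw [le_div_iff₀ (by positivity)]
    nlinarith
  refine (iInf₂_le _ ⟨star_cover F hF, hmesh⟩).trans ?_
  refine (iInf₂_le _ ⟨star_cover F hF, fun V hV => ⟨V, hV, subset_rfl⟩⟩).trans ?_
  refine (star_ord F).trans ?_
  simp

/-- for every positive integer `D`, the full shift on the alphabet
`[0,1]^D` has mean dimension `D`. -/
theorem mdim_fullshift_cube (D : ℕ) (hD : 0 < D)
    (d : (ℤ → (Fin D → unitInterval)) → (ℤ → (Fin D → unitInterval)) → ℝ)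
    (hd : IsCompatMetric d) :
    mdim (shift (Fin D → unitInterval)) d = (D : ℝ≥0∞) := by
  apply le_antisymm
  · refine iSup₂_le fun ε hε => ?_
    obtain ⟨m, hm⟩ := widim_upper hd hε
    have hlim : Tendsto (fun n : ℕ => (D : ℝ≥0∞) + ((m * D : ℕ) : ℝ≥0∞) * (n : ℝ≥0∞)⁻¹) atTop
        (nhds ((D : ℝ≥0∞) + ((m * D : ℕ) : ℝ≥0∞) * 0)) :=
      tendsto_const_nhds.add (ENNReal.Tendsto.const_mul ENNReal.tendsto_inv_nat_nhds_zero
        (Or.inr (ENNReal.natCast_ne_top _)))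
    rw [mul_zero, add_zero] at hlim
    rw [← hlim.liminf_eq]
    refine liminf_le_liminf ?_
    filter_upwards [eventually_gt_atTop 0] with n hn
    have hn0 : (n : ℝ≥0∞) ≠ 0 := by exact_mod_cast hn.ne'
    refine ENNReal.div_le_of_le_mul ?_
    have h1 : (widim ε (dynDist d (shift (Fin D → unitInterval)) n) : ℝ≥0∞) ≤
        (((n + m) * D : ℕ) : ℝ≥0∞) := by
      have := ENat.toENNReal_mono (hm n)
      simpa using this
    refine h1.trans (le_of_eq ?_)
    rw [add_mul (D : ℝ≥0∞), mul_assoc, ENNReal.inv_mul_cancel hn0 (ENNReal.natCast_ne_top _)]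
    push_cast; ring
  · obtain ⟨ε, hε, hfar⟩ := far_of_faces hD hd
    refine le_iSup₂_of_le ε hε ?_
    refine le_liminf_of_le (by isBoundedDefault) ?_
    filter_upwards [eventually_gt_atTop 0] with n hn
    have hn0 : (n : ℝ≥0∞) ≠ 0 := by exact_mod_cast hn.ne'
    rw [ENNReal.le_div_iff_mul_le (Or.inl hn0) (Or.inl (ENNReal.natCast_ne_top _))]
    have := ENat.toENNReal_mono (widim_lower hd hfar n)
    refine le_trans (le_of_eq ?_) this
    push_cast; ring

end MeanDimPaper
end
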